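/- Let G be a cycle on an odd number n ≥ 3 of vertices and u,v distinct vertices. Then there is a unique vertex x with d(x,u)=d(x,v), and fix(u,v) = V(G) \ {x}. -/

import Mathlib

def fixesPair {V : Type*} (G : SimpleGraph V) (x u v : V) : Prop :=
  ∀ g : G ≃g G, g x = x → g u ≠ v ∧ g v ≠ u

def fixSet {V : Type*} (G : SimpleGraph V) (u v : V) : Set V :=
  {x | fixesPair G x u v}

theorem aux_dist_le {V W : Type*} {G : SimpleGraph V} {H : SimpleGraph W} (g : G ≃g H)
    (hc : G.Connected) (a b : V) : H.dist (g a) (g b) ≤ G.dist a b := by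
  obtain ⟨p, hp⟩ := hc.exists_walk_length_eq_dist a b
  rw [← hp, ← SimpleGraph.Walk.length_map g.toHom p]
  exact SimpleGraph.dist_le _

theorem aux_dist_eq {V : Type*} {G : SimpleGraph V} (g : G ≃g G)
    (hc : G.Connected) (a b : V) : G.dist (g a) (g b) = G.dist a b := by
  refine le_antisymm (aux_dist_le g hc a b) ?_
  simpa using aux_dist_le g.symm hc (g a) (g b)

theorem aux_upper {A : Type*} [AddCommGroup A] {e : A} {G : SimpleGraph A}
    (hadj : ∀ a b, G.Adj a b ↔ a ≠ b ∧ (a - b = e ∨ b - a = e)) (hc : G.Connected) (k : ℕ) :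
    ∀ a : A, G.dist a (a + k • e) ≤ k := by
  induction k with
  | zero => intro a; simp
  | succ k ih =>
    intro a
    have h1 : G.dist (a + k • e) (a + (k + 1) • e) ≤ 1 := by
      by_cases h : a + k • e = a + (k + 1) • e
      · rw [← h]; simp
      · refine le_of_eq (SimpleGraph.dist_eq_one_iff_adj.2 ((hadj _ _).2 ⟨h, Or.inr ?_⟩))
        rw [succ_nsmul]; abel
    have := hc.dist_triangle (u := a) (v := a + k • e) (w := a + (k + 1) • e)
    have := ih a
    omega

theorem aux_char {A : Type*} [AddCommGroup A] {e : A} {G : SimpleGraph A}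
    (hadj : ∀ a b, G.Adj a b ↔ a ≠ b ∧ (a - b = e ∨ b - a = e)) (hc : G.Connected) (k : ℕ) :
    ∀ a b : A, G.dist a b = k → b = a + k • e ∨ a = b + k • e := by
  induction k with
  | zero =>
    intro a b h
    left
    rw [(hc.dist_eq_zero_iff).1 h]; simp
  | succ k ih =>
    intro a b h
    obtain ⟨p, hp⟩ := hc.exists_walk_length_eq_dist a b
    rw [h] at hp
    cases p with
    | nil => simp at hp
    | @cons _ c _ hac q =>
      have hq : q.length = k := by simpa using hp
      have h1 : G.dist c b ≤ k := hq ▸ SimpleGraph.dist_le q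
      have h2 := hc.dist_triangle (u := a) (v := c) (w := b)
      have h3 : G.dist a c = 1 := SimpleGraph.dist_eq_one_iff_adj.2 hac
      have h4 : G.dist c b = k := by omega
      have h5 := ((hadj _ _).1 hac).2
      rcases k with _ | k
      · have : c = b := (hc.dist_eq_zero_iff).1 h4
        subst this
        rcases h5 with h5 | h5
        · right; rw [← h5]; simp
        · left; rw [← h5]; simp
      · rcases ih c b h4 with h6 | h6 <;> rcases h5 with h5 | h5
        · exfalso
          have : b = a + k • e := by
            rw [h6, succ_nsmul, ← h5]; abel
          have h7 := aux_upper hadj hc k a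
          rw [← this] at h7; omega
        · left
          rw [h6, succ_nsmul _ (k+1), ← sub_add_cancel c a, h5]; abel
        · right
          rw [succ_nsmul _ (k+1), ← sub_add_cancel a c, h5, h6]; abel
        · exfalso
          have : a = b + k • e := by
            have : a = c - e := by rw [← h5]; abel
            rw [this, h6, succ_nsmul]; abel
          have h7 := aux_upper hadj hc k b
          rw [← this, SimpleGraph.dist_comm] at h7; omega

theorem aux_main {A : Type*} [AddCommGroup A] {e : A} {G : SimpleGraph A}
    (hadj : ∀ a b, G.Adj a b ↔ a ≠ b ∧ (a - b = e ∨ b - a = e)) (hc : G.Connected)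
    (u v : A) (huv : u ≠ v) (x : A) (hx : x + x = u + v)
    (hinj : ∀ y : A, y + y = u + v → y = x) :
    (G.dist x u = G.dist x v ∧ ∀ y : A, G.dist y u = G.dist y v → y = x) ∧
      fixSet G u v = Set.univ \ {x} := by
  let g : G ≃g G :=
    { toEquiv := Equiv.subLeft (u + v)
      map_rel_iff' := by
        intro a b
        simp only [Equiv.subLeft_apply, hadj, sub_sub_sub_cancel_left, ne_eq, sub_right_inj]
        tauto }
  have hg : ∀ a, g a = u + v - a := fun a => rfl
  have gx : g x = x := by rw [hg, ← hx]; abel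
  have gu : g u = v := by rw [hg]; abel
  have huniq : ∀ y : A, G.dist y u = G.dist y v → y = x := by
    intro y hy
    apply hinj
    rcases aux_char hadj hc _ y u rfl with h1 | h1 <;>
      rcases aux_char hadj hc _ y v hy.symm with h2 | h2
    · exact absurd (h1.trans h2.symm) huv
    · generalize G.dist y u • e = t at h1 h2
      rw [h1]; nth_rw 2 [h2]; abel
    · generalize G.dist y u • e = t at h1 h2
      rw [h2]; nth_rw 1 [h1]; abel
    · exact absurd (add_right_cancel (h1.symm.trans h2)) huv
  refine ⟨⟨?_, huniq⟩, ?_⟩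
  · have := aux_dist_eq g hc x u
    rw [gx, gu] at this
    exact this.symm
  · ext y
    simp only [fixSet, fixesPair, Set.mem_ofPred_eq, Set.mem_sdiff, Set.mem_univ, true_and,
      Set.mem_singleton_iff]
    constructor
    · rintro h rfl
      exact (h g gx).1 gu
    · intro h f hf
      constructor
      · intro hfu
        have := aux_dist_eq f hc y u
        rw [hf, hfu] at this
        exact h (huniq y this.symm)
      · intro hfu
        have := aux_dist_eq f hc y v
        rw [hf, hfu] at this
        exact h (huniq y this)

/-- In an odd cycle `C_n`, `n ≥ 3`, for distinct `u,v` there is a unique vertex `x`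
equidistant from `u` and `v`, and the fixing set of `(u,v)` is everything except `x`. -/
theorem stmt5 {n : ℕ} (hn : Odd n) (hn3 : 3 ≤ n) (u v : Fin n) (huv : u ≠ v) :
    ∃ x : Fin n,
      ((SimpleGraph.cycleGraph n).dist x u = (SimpleGraph.cycleGraph n).dist x v ∧
        ∀ y : Fin n,
          (SimpleGraph.cycleGraph n).dist y u = (SimpleGraph.cycleGraph n).dist y v → y = x) ∧
      fixSet (SimpleGraph.cycleGraph n) u v = Set.univ \ {x} := by
  obtain ⟨m, rfl⟩ := hn
  have hinj : Function.Injective (fun y : Fin (2 * m + 1) => y + y) := by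
    intro a b h
    have h' := congrArg Fin.val h
    simp only [Fin.val_add] at h'
    have ha := a.2
    have hb := b.2
    apply Fin.ext
    rw [Nat.mod_def, Nat.mod_def] at h'
    have h1 : (a.val + a.val) / (2 * m + 1) < 2 := Nat.div_lt_of_lt_mul (by omega)
    have h2 : (b.val + b.val) / (2 * m + 1) < 2 := Nat.div_lt_of_lt_mul (by omega)
    have h3 := Nat.mul_div_le (a.val + a.val) (2 * m + 1)
    have h4 := Nat.mul_div_le (b.val + b.val) (2 * m + 1)
    generalize (a.val + a.val) / (2 * m + 1) = p at *
    generalize (b.val + b.val) / (2 * m + 1) = q at *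
    interval_cases p <;> interval_cases q <;> omega
  obtain ⟨x, hx⟩ := (Finite.injective_iff_surjective.1 hinj) (u + v)
  refine ⟨x, aux_main (e := 1) ?_ (SimpleGraph.cycleGraph_connected) u v huv x hx
    (fun y hy => hinj (hy.trans hx.symm))⟩
  intro a b
  rw [SimpleGraph.cycleGraph_eq_circulantGraph]
  simp [SimpleGraph.circulantGraph]
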